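/- Let V be a real normed vector space, let d ≥ 2 be even, and let f : V^d → ℝ be a symmetric multilinear map. Let m ∈ ℝ satisfy m ≤ f(x, x, …, x) for every x ∈ V with ‖x‖ ≤ 1. Then for all x¹, …, x^d ∈ V with ‖x^k‖ = 1 for each k, there exist signs β₁, …, β_d ∈ {−1, 1} with ∏_{i=1}^d β_i = 1 such that, setting w = (1/d)·Σ_{k=1}^d β_k x^k (which satisfies ‖w‖ ≤ 1), f(w, w, …, w) − m ≥ 2 · d^{−d} · d! · f(x¹, …, x^d). (Deterministic core of the even-degree case, inequality (5.4), of the paper's Theorem 5.1.) -/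

import Mathlib

/-- The signs are uncorrelated: averaging `∏ i, β i` against the monomial `∏ i, β (r i)` over all
sign vectors `β` gives zero unless every sign occurs in the monomial. -/
theorem sum_prod_sign_mul_prod_sign_comp_eq_zero {ι : Type*} [Fintype ι] [DecidableEq ι]
    {r : ι → ι} (hr : ¬ Function.Surjective r) :
    ∑ β : ι → ℤˣ, (∏ i, ((β i : ℤ) : ℝ)) * ∏ i, ((β (r i) : ℤ) : ℝ) = 0 := by
  obtain ⟨j, hj⟩ := not_forall.mp hr
  have hmonomial (β : ι → ℤˣ) : (∏ i, ((β i : ℤ) : ℝ)) * ∏ i, ((β (r i) : ℤ) : ℝ) =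
      ∏ k, ((β k : ℤ) : ℝ) * ((β k : ℤ) : ℝ) ^ (Finset.univ.filter (r · = k)).card := by
    rw [Finset.prod_mul_distrib,
      ← Finset.prod_fiberwise Finset.univ r fun i => ((β (r i) : ℤ) : ℝ)]
    congr 1
    refine Finset.prod_congr rfl fun k _ => Finset.prod_eq_pow_card fun i hi => ?_
    rw [(Finset.mem_filter.mp hi).2]
  simp_rw [hmonomial]
  rw [← Fintype.prod_sum fun k (s : ℤˣ) =>
    ((s : ℤ) : ℝ) * ((s : ℤ) : ℝ) ^ (Finset.univ.filter (r · = k)).card]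
  refine Finset.prod_eq_zero (Finset.mem_univ j) ?_
  have hfiber : Finset.univ.filter (r · = j) = ∅ :=
    Finset.filter_eq_empty_iff.mpr fun i _ hi => hj ⟨i, hi⟩
  simp [hfiber, UnitsInt.univ]

theorem prod_sign_mul_self {ι : Type*} [Fintype ι] (β : ι → ℤˣ) :
    (∏ i, ((β i : ℤ) : ℝ)) * ∏ i, ((β i : ℤ) : ℝ) = 1 := by
  rw [← Finset.prod_mul_distrib]
  refine Finset.prod_eq_one fun i _ => ?_
  rcases Int.units_eq_one_or (β i) with h | h <;> simp [h]

/-- The product of the signs has mean zero over all sign vectors. -/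
theorem sum_prod_sign_eq_zero {ι : Type*} [Fintype ι] [DecidableEq ι] [Nonempty ι] :
    ∑ β : ι → ℤˣ, ∏ i, ((β i : ℤ) : ℝ) = 0 := by
  rw [← Fintype.prod_sum fun (_ : ι) (s : ℤˣ) => ((s : ℤ) : ℝ)]
  simp [UnitsInt.univ]

/-- The polarization formula for symmetric multilinear maps. -/
theorem MultilinearMap.sum_prod_sign_mul_map_sum_sign_smul {ι V : Type*} [Fintype ι]
    [DecidableEq ι] [AddCommGroup V] [Module ℝ V] (f : MultilinearMap ℝ (fun _ : ι => V) ℝ)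
    (hsymm : ∀ (x : ι → V) (σ : Equiv.Perm ι), f (fun i => x (σ i)) = f x) (x : ι → V) :
    ∑ β : ι → ℤˣ, (∏ i, ((β i : ℤ) : ℝ)) * f (fun _ => ∑ k, ((β k : ℤ) : ℝ) • x k) =
      2 ^ Fintype.card ι * (Fintype.card ι).factorial * f x := by
  have hexpand (β : ι → ℤˣ) : f (fun _ => ∑ k, ((β k : ℤ) : ℝ) • x k) =
      ∑ r : ι → ι, (∏ i, ((β (r i) : ℤ) : ℝ)) * f (fun i => x (r i)) := by
    rw [f.map_sum fun _ k => ((β k : ℤ) : ℝ) • x k]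
    exact Finset.sum_congr rfl fun r _ => f.map_smul_univ _ _
  simp_rw [hexpand, Finset.mul_sum, ← mul_assoc]
  rw [Finset.sum_comm]
  simp_rw [← Finset.sum_mul]
  rw [← Finset.sum_of_injOn (s := Finset.univ)
    (f := fun _ : Equiv.Perm ι => (2 : ℝ) ^ Fintype.card ι * f x) (fun σ => ⇑σ)
    (DFunLike.coe_injective.injOn) (by simp)]
  · simp [Fintype.card_perm]
    ring
  · intro r _ hr
    rw [sum_prod_sign_mul_prod_sign_comp_eq_zero, zero_mul]
    intro hsurj
    exact hr ⟨Equiv.ofBijective r (Finite.surjective_iff_bijective.mp hsurj), by simp, rfl⟩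
  · intro σ _
    have hprod (β : ι → ℤˣ) : ∏ i, ((β (σ i) : ℤ) : ℝ) = ∏ i, ((β i : ℤ) : ℝ) :=
      Equiv.prod_comp σ fun i => ((β i : ℤ) : ℝ)
    simp [hprod, prod_sign_mul_self, hsymm]

theorem norm_average_sign_smul_le_one {V : Type*} [SeminormedAddCommGroup V] [NormedSpace ℝ V]
    {d : ℕ} (β : Fin d → ℤˣ) (x : Fin d → V) (hx : ∀ k, ‖x k‖ ≤ 1) :
    ‖(1 / (d : ℝ)) • ∑ k, ((β k : ℤ) : ℝ) • x k‖ ≤ 1 := by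
  have hsum : ‖∑ k, ((β k : ℤ) : ℝ) • x k‖ ≤ d := by
    calc ‖∑ k, ((β k : ℤ) : ℝ) • x k‖ ≤ ∑ _k : Fin d, (1 : ℝ) := by
          refine norm_sum_le_of_le _ fun k _ => ?_
          rcases Int.units_eq_one_or (β k) with h | h <;> simpa [h] using hx k
      _ = d := by simp
  rw [norm_smul, Real.norm_of_nonneg (by positivity), one_div, inv_mul_eq_div]
  exact div_le_one_of_le₀ hsum (Nat.cast_nonneg d)

/-- deterministic core of the even-degree case, inequality (5.4): for even
`d ≥ 2`, a symmetric multilinear map `f : V^d → ℝ` on a real normed space, a lower bound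
`m ≤ f(x,…,x)` valid on the unit ball, and unit vectors `x¹, …, x^d`, there are signs
`β₁, …, β_d ∈ {−1,1}` with `Πᵢ βᵢ = 1` such that `w = (1/d)·Σₖ βₖ xᵏ` satisfies `‖w‖ ≤ 1`
and `f(w, …, w) − m ≥ 2·d^{−d}·d!·f(x¹, …, x^d)`. -/
theorem stmt_12 {V : Type*} [NormedAddCommGroup V] [NormedSpace ℝ V] (d : ℕ)
    (hd : 2 ≤ d) (heven : Even d)
    (f : MultilinearMap ℝ (fun _ : Fin d => V) ℝ)
    (hsymm : ∀ (x : Fin d → V) (σ : Equiv.Perm (Fin d)), f (fun i => x (σ i)) = f x)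
    (m : ℝ) (hm : ∀ y : V, ‖y‖ ≤ 1 → m ≤ f (fun _ => y))
    (x : Fin d → V) (hx : ∀ k, ‖x k‖ = 1) :
    ∃ β : Fin d → ℝ, (∀ i, β i = 1 ∨ β i = -1) ∧ (∏ i, β i) = 1 ∧
      ‖(1 / (d : ℝ)) • ∑ k, β k • x k‖ ≤ 1 ∧
      2 * ((d : ℝ) ^ d)⁻¹ * (Nat.factorial d : ℝ) * f x ≤
        f (fun _ => (1 / (d : ℝ)) • ∑ k, β k • x k) - m := by
  have : NeZero d := ⟨by omega⟩
  have hdpos : (0 : ℝ) < d := by exact_mod_cast (by omega : 0 < d)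
  let w (β : Fin d → ℤˣ) : V := (1 / (d : ℝ)) • ∑ k, ((β k : ℤ) : ℝ) • x k
  let p (β : Fin d → ℤˣ) : ℝ := ∏ i, ((β i : ℤ) : ℝ)
  set C : ℝ := 2 * ((d : ℝ) ^ d)⁻¹ * (Nat.factorial d : ℝ) * f x with hC
  have hw (β : Fin d → ℤˣ) : ‖w β‖ ≤ 1 :=
    norm_average_sign_smul_le_one β x fun k => (hx k).le
  have hscale (β : Fin d → ℤˣ) : f (fun _ => w β) =
      ((d : ℝ) ^ d)⁻¹ * f (fun _ => ∑ k, ((β k : ℤ) : ℝ) • x k) := by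
    have h := f.map_smul_univ (fun _ => 1 / (d : ℝ)) fun _ => ∑ k, ((β k : ℤ) : ℝ) • x k
    simpa [w] using h
  have hp_sum : ∑ β, p β = 0 := sum_prod_sign_eq_zero
  have hpolar : ∑ β, p β * (f (fun _ => w β) - m) = ∑ β, (1 + p β) / 2 * C := by
    have h := f.sum_prod_sign_mul_map_sum_sign_smul hsymm x
    rw [Fintype.card_fin] at h
    have hleft : ∑ β, p β * (f (fun _ => w β) - m) =
        ((d : ℝ) ^ d)⁻¹ * (2 ^ d * d.factorial * f x) := by
      simp_rw [mul_sub, Finset.sum_sub_distrib, ← Finset.sum_mul, hp_sum, hscale, ← h,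
        Finset.mul_sum]
      rw [zero_mul, sub_zero]
      exact Finset.sum_congr rfl fun β _ => mul_left_comm _ _ _
    rw [hleft, ← Finset.sum_mul, ← Finset.sum_div, Finset.sum_add_distrib, hp_sum, hC]
    simp
    ring
  by_contra! hcontra
  have hlt (β : Fin d → ℤˣ) (hβ : p β = 1) : f (fun _ => w β) - m < C :=
    hcontra (fun i => ((β i : ℤ) : ℝ))
      (fun i => by rcases Int.units_eq_one_or (β i) with h | h <;> simp [h]) hβ (hw β)
  refine hpolar.not_lt (Finset.sum_lt_sum (fun β _ => ?_) ⟨1, Finset.mem_univ _, ?_⟩)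
  · rcases mul_self_eq_one_iff.mp (prod_sign_mul_self β) with h | h
    · have := hlt β h
      change p β = 1 at h
      rw [h]
      linarith
    · have := hm _ (hw β)
      change p β = -1 at h
      rw [h]
      linarith
  · have h : p 1 = 1 := by simp [p]
    have := hlt 1 h
    rw [h]
    linarith
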